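/- arXiv:1504.00728 — 3 statements merged into one kernel-verified Lean document; each statement's English description precedes it below -/
import Mathlib

section
/- Let A, B, D ∈ ℂ and define g(y,z) = z·(A(y⁴z² + √−1·z⁴ − z² − √−1·y⁴) + B(y⁴z + √−1·y²z³ − z³ − √−1·y²z) + D(y³z² + √−1·yz³ − yz² − √−1·y³z)). Then for all w, y, z ∈ ℂ with y ≠ 0 and z ≠ 0, if w² = g(y,z), then (ζ₈·y³·w/z⁴)² = g(y/z, y²/z), where ζ₈ = (1+√−1)/√2. In other words, the hypersurface {w² = g(y,z)} is invariant under the map σ₂ : (w,y,z) ↦ (ζ₈·y³·w/z⁴, y/z, y²/z). -/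
/-!
The substitution `(y, z) ↦ (y / z, y² / z)` sends the monomial `yᵃ zᵇ` to `y⁶ / z⁸` times the
monomial with exponents `(a + 2 * b - 6, 8 - a - b)`. This affine map of exponents has order four,
so weighting an orbit of monomials by the powers of a fourth root of unity `μ` gives a function
which the substitution multiplies by `μ * y⁶ / z⁸`. The function `g` combines the orbits of
`y⁴ z³`, `y⁴ z²` and `y³ z³` with `μ = √-1`, and `ζ₈ ^ 2 = √-1` supplies the same factor for
`w ^ 2`.
-/

section SemiInvariants

variable {K : Type*} [Field K]

/-- The functions which the monomial substitution `(y, z) ↦ (y / z, y² / z)` underlying `σ₂`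
multiplies by `μ * y⁶ / z⁸`. The condition is imposed only on the torus `y ≠ 0`, `z ≠ 0`, where the
substitution is bijective. -/
def semiInvariants (μ : K) : Submodule K (K → K → K) where
  carrier := {f | ∀ y z : K, y ≠ 0 → z ≠ 0 →
    f (y / z) (y ^ 2 / z) = μ * y ^ 6 / z ^ 8 * f y z}
  zero_mem' := fun y z _ _ => by simp
  add_mem' := fun hf hg y z hy hz => by
    simp only [Pi.add_apply, hf y z hy hz, hg y z hy hz, mul_add]
  smul_mem' := fun c f hf y z hy hz => by
    simp only [Pi.smul_apply, smul_eq_mul, hf y z hy hz, mul_left_comm]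

/-- The sum over the four-step orbit of the Laurent monomial `yᵃ zᵇ` under the exponent map
`(a, b) ↦ (a + 2 * b - 6, 8 - a - b)`, the `k`-th term being weighted by `μ ^ (4 - k)`, which
is `μ⁻ᵏ` when `μ ^ 4 = 1`. -/
def orbitSum (μ : K) (a b : ℤ) (y z : K) : K :=
  y ^ a * z ^ b + μ ^ 3 * (y ^ (a + 2 * b - 6) * z ^ (8 - a - b)) +
    μ ^ 2 * (y ^ (4 - a) * z ^ (6 - b)) + μ * (y ^ (10 - a - 2 * b) * z ^ (a + b - 2))

theorem div_zpow_mul_sq_div_zpow {y z : K} (hy : y ≠ 0) (hz : z ≠ 0) (a b : ℤ) :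
    (y / z) ^ a * (y ^ 2 / z) ^ b =
      y ^ 6 / z ^ 8 * (y ^ (a + 2 * b - 6) * z ^ (8 - a - b)) := by
  have hy_exp : y ^ 6 * y ^ (a + 2 * b - 6) = y ^ a * (y ^ 2) ^ b := by
    rw [← zpow_natCast y 6, ← zpow_natCast y 2, ← zpow_mul, ← zpow_add₀ hy, ← zpow_add₀ hy]
    congr 1
    push_cast
    ring
  have hz_exp : z ^ (8 - a - b) * (z ^ a * z ^ b) = z ^ 8 := by
    rw [← zpow_natCast z 8, ← zpow_add₀ hz, ← zpow_add₀ hz]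
    congr 1
    push_cast
    ring
  rw [div_zpow, div_zpow, div_mul_div_comm, ← hy_exp, div_mul_eq_mul_div,
    div_eq_div_iff (mul_ne_zero (zpow_ne_zero a hz) (zpow_ne_zero b hz)) (pow_ne_zero 8 hz),
    ← hz_exp]
  ring

theorem orbitSum_mem_semiInvariants {μ : K} (hμ : μ ^ 4 = 1) (a b : ℤ) :
    orbitSum μ a b ∈ semiInvariants μ := by
  intro y z hy hz
  have monomial_image := div_zpow_mul_sq_div_zpow hy hz
  simp only [orbitSum, monomial_image]
  rw [show a + 2 * b - 6 + 2 * (8 - a - b) - 6 = 4 - a by ring,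
    show 8 - (a + 2 * b - 6) - (8 - a - b) = 6 - b by ring,
    show 4 - a + 2 * (6 - b) - 6 = 10 - a - 2 * b by ring,
    show 8 - (4 - a) - (6 - b) = a + b - 2 by ring,
    show 10 - a - 2 * b + 2 * (a + b - 2) - 6 = a by ring,
    show 8 - (10 - a - 2 * b) - (a + b - 2) = b by ring]
  linear_combination
    -(y ^ 6 / z ^ 8 * (y ^ (a + 2 * b - 6) * z ^ (8 - a - b))) * hμ

theorem sq_eq_iff_of_mem_semiInvariants {μ ζ : K} (hμ : μ ≠ 0) (hζ : ζ ^ 2 = μ)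
    {g : K → K → K} (hg : g ∈ semiInvariants μ) {w y z : K} (hy : y ≠ 0) (hz : z ≠ 0) :
    (ζ * y ^ 3 * w / z ^ 4) ^ 2 = g (y / z) (y ^ 2 / z) ↔ w ^ 2 = g y z := by
  have factor_ne_zero : μ * y ^ 6 / z ^ 8 ≠ 0 :=
    div_ne_zero (mul_ne_zero hμ (pow_ne_zero 6 hy)) (pow_ne_zero 8 hz)
  have sq_eq : (ζ * y ^ 3 * w / z ^ 4) ^ 2 = μ * y ^ 6 / z ^ 8 * w ^ 2 := by
    rw [← hζ]
    ring
  rw [sq_eq, hg y z hy hz, mul_right_inj' factor_ne_zero]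

end SemiInvariants

theorem one_add_I_div_sqrt_two_sq : ((1 + Complex.I) / Real.sqrt 2) ^ 2 = Complex.I := by
  have sqrt_two_sq : (Real.sqrt 2 : ℂ) ^ 2 = 2 := by
    exact_mod_cast Real.sq_sqrt zero_le_two
  rw [div_pow, sqrt_two_sq]
  linear_combination Complex.I_sq / 2

theorem stmt_4_general {K : Type*} [Field K] {i ζ : K} (hi : i ^ 2 = -1) (hζ : ζ ^ 2 = i)
    (A B D : K) (g : K → K → K)
    (hg : ∀ y z : K, g y z =
      z * (A * (y ^ 4 * z ^ 2 + i * z ^ 4 - z ^ 2 - i * y ^ 4) +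
        B * (y ^ 4 * z + i * y ^ 2 * z ^ 3 - z ^ 3 - i * y ^ 2 * z) +
        D * (y ^ 3 * z ^ 2 + i * y * z ^ 3 - y * z ^ 2 - i * y ^ 3 * z)))
    (w y z : K) (hy : y ≠ 0) (hz : z ≠ 0) :
    (ζ * y ^ 3 * w / z ^ 4) ^ 2 = g (y / z) (y ^ 2 / z) ↔ w ^ 2 = g y z := by
  have hi_four : i ^ 4 = 1 := by linear_combination (i ^ 2 - 1) * hi
  have hi_ne_zero : i ≠ 0 := by
    rintro rfl
    simp at hi
  have g_eq : g = A • orbitSum i 4 3 + B • orbitSum i 4 2 + D • orbitSum i 3 3 := by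
    have hi_three : i ^ 3 = -i := by linear_combination i * hi
    funext y z
    simp only [hg, Pi.add_apply, Pi.smul_apply, smul_eq_mul, orbitSum, hi, hi_three]
    simp only [Int.reduceMul, Int.reduceAdd, Int.reduceSub, zpow_ofNat, pow_zero, pow_one]
    ring
  have g_mem : g ∈ semiInvariants i := by
    have orbit_mem := orbitSum_mem_semiInvariants hi_four
    rw [g_eq]
    exact add_mem (add_mem (Submodule.smul_mem _ A (orbit_mem 4 3))
      (Submodule.smul_mem _ B (orbit_mem 4 2))) (Submodule.smul_mem _ D (orbit_mem 3 3))
  exact sq_eq_iff_of_mem_semiInvariants hi_ne_zero hζ g_mem hy hz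

/-- The Enriques surface equation of Example 1.2 is invariant under the order-8 map
`σ₂ : (w, y, z) ↦ (ζ₈·y³·w/z⁴, y/z, y²/z)` where `ζ₈ = (1+√-1)/√2`. -/
theorem stmt_4 (A B D : ℂ) (g : ℂ → ℂ → ℂ)
    (hg : ∀ y z : ℂ, g y z =
      z * (A * (y ^ 4 * z ^ 2 + Complex.I * z ^ 4 - z ^ 2 - Complex.I * y ^ 4) +
        B * (y ^ 4 * z + Complex.I * y ^ 2 * z ^ 3 - z ^ 3 - Complex.I * y ^ 2 * z) +
        D * (y ^ 3 * z ^ 2 + Complex.I * y * z ^ 3 - y * z ^ 2 - Complex.I * y ^ 3 * z))) :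
    ∀ w y z : ℂ, y ≠ 0 → z ≠ 0 → w ^ 2 = g y z →
      ((1 + Complex.I) / Real.sqrt 2 * y ^ 3 * w / z ^ 4) ^ 2 =
        g (y / z) (y ^ 2 / z) :=
  fun w y z hy hz =>
    (stmt_4_general Complex.I_sq one_add_I_div_sqrt_two_sq A B D g hg w y z hy hz).mpr
end

section
/- Let σ₂ be the map (w,y,z) ↦ (ζ₈·y³·w/z⁴, y/z, y²/z) and σ₁ the map (w,y,z) ↦ (√−1·w/(y²z³), 1/y, 1/z), both on the set T = {(w,y,z) ∈ ℂ³ : w ≠ 0, y ≠ 0, z ≠ 0}, where ζ₈ = (1+√−1)/√2. Then σ₂ maps T to itself, σ₂(σ₂(w,y,z)) = σ₁(w,y,z) for all (w,y,z) ∈ T, the eighth iterate of σ₂ is the identity on T, and the fourth iterate of σ₂ equals (w,y,z) ↦ (−w,y,z), which is not the identity. Hence σ₂ has order exactly 8 as a permutation of T. -/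
/-- The map `σ₂ : (w, y, z) ↦ (ζ₈·y³·w/z⁴, y/z, y²/z)`, where `ζ₈ = (1+√-1)/√2`. -/
noncomputable def sigma2 : ℂ × ℂ × ℂ → ℂ × ℂ × ℂ :=
  fun p => ((1 + Complex.I) / Real.sqrt 2 * p.2.1 ^ 3 * p.1 / p.2.2 ^ 4,
    p.2.1 / p.2.2, p.2.1 ^ 2 / p.2.2)

/-- The map `σ₁ : (w, y, z) ↦ (√-1·w/(y²z³), 1/y, 1/z)`. -/
noncomputable def sigma1 : ℂ × ℂ × ℂ → ℂ × ℂ × ℂ :=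
  fun p => (Complex.I * p.1 / (p.2.1 ^ 2 * p.2.2 ^ 3), 1 / p.2.1, 1 / p.2.2)

/-- The set `T = {(w,y,z) ∈ ℂ³ : w ≠ 0, y ≠ 0, z ≠ 0}`. -/
def Tset : Set (ℂ × ℂ × ℂ) := {p | p.1 ≠ 0 ∧ p.2.1 ≠ 0 ∧ p.2.2 ≠ 0}

/-!
On `(y, z)` the map `σ₂` is monomial, with exponent matrix `!![1, -1; 2, -1]`. This matrix squares
to `-1`, so `σ₂²` inverts `y` and `z` and `σ₂⁴` fixes them. On the first coordinate the monomial
factors cancel over a full turn as well, and only the constant `ζ⁴` survives; it equals `-1` when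
`ζ` is a primitive eighth root of unity.
-/

open Set

section CommGroupWithZero

variable {G : Type*} [CommGroupWithZero G]

/-- The map `σ₂` over an arbitrary commutative group with zero, with a parameter `ζ` in place of
`ζ₈`; named for its action on `(y, z)`, which is of order 4. -/
def quarterTurn (ζ : G) (p : G × G × G) : G × G × G :=
  (ζ * p.2.1 ^ 3 * p.1 / p.2.2 ^ 4, p.2.1 / p.2.2, p.2.1 ^ 2 / p.2.2)

/-- The map `σ₁` over an arbitrary commutative group with zero, with a parameter `c` in place
of `√-1`. -/
def twistedInversion (c : G) (p : G × G × G) : G × G × G :=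
  (c * p.1 / (p.2.1 ^ 2 * p.2.2 ^ 3), 1 / p.2.1, 1 / p.2.2)

variable (G) in
/-- The split three-dimensional torus: the set `T` with coordinates in `G`. -/
def splitTorus : Set (G × G × G) := {p | p.1 ≠ 0 ∧ p.2.1 ≠ 0 ∧ p.2.2 ≠ 0}

theorem mapsTo_quarterTurn_splitTorus {ζ : G} (hζ : ζ ≠ 0) :
    MapsTo (quarterTurn ζ) (splitTorus G) (splitTorus G) := by
  rintro ⟨w, y, z⟩ ⟨hw, hy, hz⟩
  exact ⟨div_ne_zero (mul_ne_zero (mul_ne_zero hζ (pow_ne_zero 3 hy)) hw) (pow_ne_zero 4 hz),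
    div_ne_zero hy hz, div_ne_zero (pow_ne_zero 2 hy) hz⟩

variable {y z : G}

theorem quarterTurn_quarterTurn (ζ w : G) (hy : y ≠ 0) (hz : z ≠ 0) :
    quarterTurn ζ (quarterTurn ζ (w, y, z)) = twistedInversion (ζ ^ 2) (w, y, z) := by
  simp only [quarterTurn, twistedInversion, Prod.mk.injEq]
  refine ⟨?_, ?_, ?_⟩ <;> field_simp

theorem twistedInversion_twistedInversion (c w : G) (hy : y ≠ 0) (hz : z ≠ 0) :
    twistedInversion c (twistedInversion c (w, y, z)) = (c ^ 2 * w, y, z) := by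
  simp only [twistedInversion, one_div_one_div, Prod.mk.injEq, and_true]
  field_simp

theorem iterate_four_quarterTurn (ζ w : G) (hy : y ≠ 0) (hz : z ≠ 0) :
    (quarterTurn ζ)^[4] (w, y, z) = (ζ ^ 4 * w, y, z) :=
  calc (quarterTurn ζ)^[4] (w, y, z)
    _ = quarterTurn ζ (quarterTurn ζ (quarterTurn ζ (quarterTurn ζ (w, y, z)))) := rfl
    _ = quarterTurn ζ (quarterTurn ζ (twistedInversion (ζ ^ 2) (w, y, z))) := by
      rw [quarterTurn_quarterTurn ζ w hy hz]
    _ = twistedInversion (ζ ^ 2) (twistedInversion (ζ ^ 2) (w, y, z)) :=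
      quarterTurn_quarterTurn ζ _ (one_div_ne_zero hy) (one_div_ne_zero hz)
    _ = ((ζ ^ 2) ^ 2 * w, y, z) := twistedInversion_twistedInversion _ w hy hz
    _ = (ζ ^ 4 * w, y, z) := by rw [← pow_mul]

theorem iterate_eight_quarterTurn (ζ w : G) (hy : y ≠ 0) (hz : z ≠ 0) :
    (quarterTurn ζ)^[8] (w, y, z) = (ζ ^ 8 * w, y, z) := by
  rw [Function.iterate_add_apply _ 4 4, iterate_four_quarterTurn ζ w hy hz,
    iterate_four_quarterTurn ζ _ hy hz, ← mul_assoc, ← pow_add]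

end CommGroupWithZero

theorem pow_eq_neg_one_of_isPrimitiveRoot_mul_two {R : Type*} [CommRing R] [NoZeroDivisors R]
    {ζ : R} {n : ℕ} (hn : 0 < n) (hζ : IsPrimitiveRoot ζ (n * 2)) : ζ ^ n = -1 :=
  (hζ.pow (Nat.mul_pos hn two_pos) rfl).eq_neg_one_of_two_right

/-- The eighth root of unity `ζ₈ = (1+√-1)/√2`. -/
noncomputable def zetaEight : ℂ := (1 + Complex.I) / Real.sqrt 2

theorem zetaEight_sq : zetaEight ^ 2 = Complex.I := by
  have sqrt_two_sq : ((Real.sqrt 2 : ℝ) : ℂ) ^ 2 = 2 := by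
    exact_mod_cast Real.sq_sqrt (zero_le_two (α := ℝ))
  rw [zetaEight, div_pow, sqrt_two_sq, add_sq, Complex.I_sq]
  ring

theorem isPrimitiveRoot_zetaEight : IsPrimitiveRoot zetaEight 8 := by
  have pow_four : zetaEight ^ 4 = -1 := by
    rw [pow_mul _ 2 2, zetaEight_sq, Complex.I_sq]
  rw [IsPrimitiveRoot.iff_orderOf]
  refine orderOf_eq_prime_pow (p := 2) (n := 2) ?_ ?_
  · norm_num [pow_four]
  · norm_num [pow_mul zetaEight 4 2, pow_four]

theorem stmt_5_general {K : Type*} [Field K] {ζ : K} (hζ : IsPrimitiveRoot ζ 8) :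
    MapsTo (quarterTurn ζ) (splitTorus K) (splitTorus K) ∧
    (∀ w y z : K, y ≠ 0 → z ≠ 0 →
      quarterTurn ζ (quarterTurn ζ (w, y, z)) = twistedInversion (ζ ^ 2) (w, y, z)) ∧
    (∀ w y z : K, y ≠ 0 → z ≠ 0 → (quarterTurn ζ)^[8] (w, y, z) = (w, y, z)) ∧
    (∀ w y z : K, y ≠ 0 → z ≠ 0 → (quarterTurn ζ)^[4] (w, y, z) = (-w, y, z)) ∧
    (∀ p ∈ splitTorus K, (quarterTurn ζ)^[4] p ≠ p) := by
  refine ⟨mapsTo_quarterTurn_splitTorus (hζ.ne_zero (by norm_num)),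
    fun w _ _ => quarterTurn_quarterTurn ζ w, fun w y z hy hz => ?_, fun w y z hy hz => ?_, ?_⟩
  · rw [iterate_eight_quarterTurn ζ w hy hz, hζ.pow_eq_one, one_mul]
  · have pow_four : ζ ^ 4 = -1 := pow_eq_neg_one_of_isPrimitiveRoot_mul_two four_pos hζ
    rw [iterate_four_quarterTurn ζ w hy hz, pow_four, neg_one_mul]
  · rintro ⟨w, y, z⟩ ⟨hw, hy, hz⟩ hfix
    rw [iterate_four_quarterTurn ζ w hy hz, Prod.mk.injEq, mul_eq_right₀ hw] at hfix
    exact hζ.pow_ne_one_of_pos_of_lt (by norm_num) (by norm_num) hfix.1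

theorem sigma2_eq_quarterTurn : sigma2 = quarterTurn zetaEight := rfl

theorem sigma1_eq_twistedInversion : sigma1 = twistedInversion (zetaEight ^ 2) := by
  rw [zetaEight_sq]
  rfl

/-- `σ₂` maps `T` to itself, `σ₂² = σ₁` on `T`, the eighth iterate of `σ₂` is the identity
on `T`, and the fourth iterate of `σ₂` equals `(w,y,z) ↦ (-w,y,z)`, which is not the
identity; hence `σ₂` has order exactly 8 as a permutation of `T`. -/
theorem stmt_5 :
    (∀ p ∈ Tset, sigma2 p ∈ Tset) ∧
    (∀ w y z : ℂ, (w, y, z) ∈ Tset → sigma2 (sigma2 (w, y, z)) = sigma1 (w, y, z)) ∧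
    (∀ p ∈ Tset, sigma2^[8] p = p) ∧
    (∀ w y z : ℂ, (w, y, z) ∈ Tset → sigma2^[4] (w, y, z) = (-w, y, z)) ∧
    (∀ p ∈ Tset, sigma2^[4] p ≠ p) := by
  rw [sigma2_eq_quarterTurn, sigma1_eq_twistedInversion]
  obtain ⟨hmaps, hsq, height, hfour, hne⟩ := stmt_5_general isPrimitiveRoot_zetaEight
  exact ⟨hmaps, fun w y z hp => hsq w y z hp.2.1 hp.2.2, fun p hp => height _ _ _ hp.2.1 hp.2.2,
    fun w y z hp => hfour w y z hp.2.1 hp.2.2, hne⟩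
end

section
/- Let A, B, C, D ∈ ℂ and define h(y,z) = z·(A·y⁴z² + B(y⁴ + z⁴) + C(y³z − √−1·yz³) + D·z²). Then for all w, y, z ∈ ℂ with y ≠ 0 and z ≠ 0, if w² = h(y,z), then (w·y³/z³)² = h(√−1·y, y²/z). In other words, the hypersurface {w² = h(y,z)} is invariant under the map σ₃ : (w,y,z) ↦ (w·y³/z³, √−1·y, y²/z). -/
/-!
Under `(y, z) ↦ (iy, y²/z)` the factor `z` of `h` is multiplied by `(y/z)²`. Each of `y⁴z²`,
`y⁴ + z⁴`, `y³z - iyz³` and `z²` is multiplied by the same factor `(y/z)⁴`: in the two binomials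
the two terms are exchanged, and the coefficient `-i` in the third is the one that
`i³ = -i` makes compatible with this exchange. Hence `h` is multiplied by `(y³/z³)²`, the same
factor by which `w ↦ w·y³/z³` multiplies `w²`.
-/

section Field

variable {K : Type*} [Field K] {i y z : K}

/-- The function `h` in the equation `w² = h(y, z)` of the Enriques surfaces of Example 1.3, over
an arbitrary field. The parameter `i` stands for a square root of `-1`. -/
def branchPoly (i A B C D y z : K) : K :=
  z * (A * y ^ 4 * z ^ 2 + B * (y ^ 4 + z ^ 4) + C * (y ^ 3 * z - i * y * z ^ 3) + D * z ^ 2)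

theorem branchPoly_mul_sq_div (hi : i ^ 2 = -1) (A B C D : K) (hz : z ≠ 0) :
    branchPoly i A B C D (i * y) (y ^ 2 / z) = (y ^ 3 / z ^ 3) ^ 2 * branchPoly i A B C D y z := by
  have i_pow_four : i ^ 4 = 1 := by linear_combination (i ^ 2 - 1) * hi
  have factor_z : y ^ 2 / z = (y / z) ^ 2 * z := by field_simp
  have factor_A : (i * y) ^ 4 * (y ^ 2 / z) ^ 2 = (y / z) ^ 4 * (y ^ 4 * z ^ 2) := by
    rw [mul_pow, i_pow_four]
    field_simp
  have factor_B : (i * y) ^ 4 + (y ^ 2 / z) ^ 4 = (y / z) ^ 4 * (y ^ 4 + z ^ 4) := by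
    rw [mul_pow, i_pow_four]
    field_simp
    ring
  have factor_C : (i * y) ^ 3 * (y ^ 2 / z) - i * (i * y) * (y ^ 2 / z) ^ 3 =
      (y / z) ^ 4 * (y ^ 3 * z - i * y * z ^ 3) := by
    have i_pow_three : i ^ 3 = -i := by linear_combination i * hi
    rw [mul_pow, i_pow_three, ← mul_assoc i i y, ← sq i, hi]
    field_simp
    ring
  have factor_D : (y ^ 2 / z) ^ 2 = (y / z) ^ 4 * z ^ 2 := by field_simp
  calc
    branchPoly i A B C D (i * y) (y ^ 2 / z)
      = (y / z) ^ 2 * z * (A * ((y / z) ^ 4 * (y ^ 4 * z ^ 2)) +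
          B * ((y / z) ^ 4 * (y ^ 4 + z ^ 4)) +
          C * ((y / z) ^ 4 * (y ^ 3 * z - i * y * z ^ 3)) + D * ((y / z) ^ 4 * z ^ 2)) := by
        rw [branchPoly, mul_assoc A, factor_A, factor_B, factor_C, factor_D, ← factor_z]
    _ = (y ^ 3 / z ^ 3) ^ 2 * branchPoly i A B C D y z := by
        rw [branchPoly]
        ring

theorem stmt_7_general (hi : i ^ 2 = -1) {A B C D w : K} (hz : z ≠ 0)
    (hw : w ^ 2 = branchPoly i A B C D y z) :
    (w * y ^ 3 / z ^ 3) ^ 2 = branchPoly i A B C D (i * y) (y ^ 2 / z) := by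
  rw [branchPoly_mul_sq_div hi A B C D hz, ← hw]
  ring

end Field

/-- The Enriques surface equation of Example 1.3 is invariant under the order-8 map
`σ₃ : (w, y, z) ↦ (w·y³/z³, √-1·y, y²/z)`. -/
theorem stmt_7 (A B C D : ℂ) (h : ℂ → ℂ → ℂ)
    (hh : ∀ y z : ℂ, h y z =
      z * (A * y ^ 4 * z ^ 2 + B * (y ^ 4 + z ^ 4) +
        C * (y ^ 3 * z - Complex.I * y * z ^ 3) + D * z ^ 2)) :
    ∀ w y z : ℂ, y ≠ 0 → z ≠ 0 → w ^ 2 = h y z →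
      (w * y ^ 3 / z ^ 3) ^ 2 = h (Complex.I * y) (y ^ 2 / z) := by
  obtain rfl : h = branchPoly Complex.I A B C D := funext₂ hh
  exact fun _ _ _ _ hz hw ↦ stmt_7_general Complex.I_sq hz hw
end
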